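/- For every γ ∈ (0,1) there exists y* ∈ M such that G_γ(y*) = inf over y ∈ M of G_γ(y); that is, the functional G_γ attains its infimum on M. -/

import Mathlib

/-!
Scaling makes `∫ y² = 1` harmless, and the constant `1` shows that the infimum is at most `1`, so a
minimizing sequence may be taken with `∫ (y')² ≤ 3/2 < 2`. Averaging
`(y x - y z)² ≤ |x - z| ∫ (y')²` over `x` shows that `y z` is within `√(∫ (y')² / 2) < 1` of the
`L²`-norm `1` of `y`: the whole sequence takes its values in a fixed compact interval of positive
numbers. A subsequence along which `y 0` converges and `y'` converges weakly in `L²` then converges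
pointwise, so both `∫ y²` and `∫ y ^ (2γ/(γ-1))` pass to the limit, while `∫ (y')²` is weakly lower
semicontinuous.
-/

open MeasureTheory Set Real

noncomputable section

/-- Pairs `(y, y')` representing a function of Sobolev class `W¹₂[0,1]`:
`y` is absolutely continuous on `[0,1]` (being an integral of `y'`)
with derivative `y'` belonging to `L²[0,1]`. -/
def W12 : Set ((ℝ → ℝ) × (ℝ → ℝ)) :=
  {p | (∀ x ∈ Icc (0:ℝ) 1, p.1 x = p.1 0 + ∫ t in (0:ℝ)..x, p.2 t) ∧
    IntervalIntegrable p.2 volume 0 1 ∧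
    IntervalIntegrable (fun t => (p.2 t) ^ 2) volume 0 1}

/-- The Rayleigh quotient `(∫₀¹ ((y')² + q y²) dx) / (∫₀¹ y² dx)`. -/
def Rayleigh (q : ℝ → ℝ) (p : (ℝ → ℝ) × (ℝ → ℝ)) : ℝ :=
  (∫ t in (0:ℝ)..1, ((p.2 t) ^ 2 + q t * (p.1 t) ^ 2)) /
    ∫ t in (0:ℝ)..1, (p.1 t) ^ 2

/-- The smallest eigenvalue `λ₁(q)` of the Neumann problem `-y'' + q y = λ y`,
`y'(0) = y'(1) = 0`, defined as the infimum of Rayleigh quotients over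
nonzero `y ∈ W¹₂[0,1]`. -/
def lambda1 (q : ℝ → ℝ) : ℝ :=
  sInf {r | ∃ p ∈ W12, 0 < (∫ t in (0:ℝ)..1, (p.1 t) ^ 2) ∧ r = Rayleigh q p}

/-- The class `A_γ` of potentials: `q ∈ L¹[0,1]`, `q ≥ 0` a.e. on `[0,1]`,
`∫₀¹ q^γ dx = 1`. -/
def Agamma (γ : ℝ) : Set (ℝ → ℝ) :=
  {q | IntervalIntegrable q volume 0 1 ∧
    (∀ᵐ t ∂(volume.restrict (Icc (0:ℝ) 1)), 0 ≤ q t) ∧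
    (∫ t in (0:ℝ)..1, q t ^ γ) = 1}

/-- `m_γ := inf_{q ∈ A_γ} λ₁(q)`. -/
def mGamma (γ : ℝ) : ℝ := sInf (lambda1 '' Agamma γ)

/-- The set `M` of uniformly positive functions of class `W¹₂[0,1]`. -/
def Mset : Set ((ℝ → ℝ) × (ℝ → ℝ)) :=
  {p ∈ W12 | ∃ ζ > (0:ℝ), ∀ x ∈ Icc (0:ℝ) 1, ζ ≤ p.1 x}

/-- `J_γ(y) := ∫₀¹ (y')² dx + (∫₀¹ y^{2γ/(γ−1)} dx)^{(γ−1)/γ}`. -/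
def Jg (γ : ℝ) (p : (ℝ → ℝ) × (ℝ → ℝ)) : ℝ :=
  (∫ t in (0:ℝ)..1, (p.2 t) ^ 2) +
    (∫ t in (0:ℝ)..1, (p.1 t) ^ (2 * γ / (γ - 1))) ^ ((γ - 1) / γ)

/-- `G_γ(y) := J_γ(y) / ∫₀¹ y² dx`. -/
def Gg (γ : ℝ) (p : (ℝ → ℝ) × (ℝ → ℝ)) : ℝ :=
  Jg γ p / ∫ t in (0:ℝ)..1, (p.1 t) ^ 2

open Filter Topology Metric
open scoped InnerProductSpace

section WeakConvergence

variable {𝕜 H : Type*} [RCLike 𝕜] [NormedAddCommGroup H] [InnerProductSpace 𝕜 H]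

lemma exists_subseq_tendsto_inner_of_norm_le [CompleteSpace H]
    [TopologicalSpace.SeparableSpace H] {f : ℕ → H} {C : ℝ} (hf : ∀ n, ‖f n‖ ≤ C) :
    ∃ (g : H) (φ : ℕ → ℕ), StrictMono φ ∧
      ∀ v, Tendsto (fun n => ⟪v, f (φ n)⟫_𝕜) atTop (𝓝 ⟪v, g⟫_𝕜) := by
  obtain ⟨a, -, φ, hφ, ha⟩ := WeakDual.isSeqCompact_closedBall 𝕜 H 0 C
    (x := fun n => StrongDual.toWeakDual (InnerProductSpace.toDual 𝕜 H (f n)))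
    (fun n => by simpa using hf n)
  refine ⟨(InnerProductSpace.toDual 𝕜 H).symm (WeakDual.toStrongDual a), φ, hφ, fun v => ?_⟩
  have hv := (RCLike.continuous_conj (K := 𝕜)).continuousAt.tendsto.comp
    (((WeakDual.eval_continuous v).tendsto a).comp ha)
  rw [← inner_conj_symm v, InnerProductSpace.toDual_symm_apply]
  exact hv.congr fun n => inner_conj_symm v (f (φ n))

lemma norm_sq_le_of_tendsto_inner {ι : Type*} {l : Filter ι} [l.NeBot] {f : ι → H} {g : H} {L : ℝ}
    (hg : Tendsto (fun i => ⟪g, f i⟫_𝕜) l (𝓝 ⟪g, g⟫_𝕜))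
    (hL : Tendsto (fun i => ‖f i‖ ^ 2) l (𝓝 L)) : ‖g‖ ^ 2 ≤ L := by
  have hre := (RCLike.continuous_re.tendsto _).comp hg
  rw [← norm_sq_eq_re_inner] at hre
  have h := le_of_tendsto_of_tendsto' (hre.const_mul 2) (hL.const_add (‖g‖ ^ 2)) fun i => by
    have := norm_sub_sq (𝕜 := 𝕜) g (f i)
    simp only [Function.comp_apply]
    linarith [sq_nonneg ‖g - f i‖]
  linarith

end WeakConvergence

section SquareIntegrable

variable {α E : Type*} [MeasurableSpace α] {μ : Measure α} [NormedAddCommGroup E]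

lemma norm_toLp_two_sq {f : α → E} (hf : MemLp f 2 μ) :
    ‖hf.toLp f‖ ^ 2 = ∫ x, ‖f x‖ ^ 2 ∂μ := by
  rw [Lp.norm_toLp, hf.eLpNorm_eq_integral_rpow_norm two_ne_zero ENNReal.ofNat_ne_top,
    ENNReal.toReal_ofReal (by positivity), ← Real.rpow_natCast, ← Real.rpow_mul (by positivity)]
  simp

lemma sq_sqrt_integral_sub_sqrt_integral_le {f g : α → E} (hf : MemLp f 2 μ) (hg : MemLp g 2 μ) :
    (√(∫ x, ‖f x‖ ^ 2 ∂μ) - √(∫ x, ‖g x‖ ^ 2 ∂μ)) ^ 2 ≤ ∫ x, ‖f x - g x‖ ^ 2 ∂μ := by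
  have h := sq_le_sq' (neg_le_of_abs_le (abs_norm_sub_norm_le (hf.toLp f) (hg.toLp g)))
    (le_of_abs_le (abs_norm_sub_norm_le (hf.toLp f) (hg.toLp g)))
  rw [← hf.toLp_sub hg, norm_toLp_two_sq (hf.sub hg)] at h
  rwa [← norm_toLp_two_sq hf, ← norm_toLp_two_sq hg, Real.sqrt_sq (norm_nonneg _),
    Real.sqrt_sq (norm_nonneg _)]

lemma sq_norm_integral_le [NormedSpace ℝ E] [IsFiniteMeasure μ] {f : α → E} (hf : MemLp f 2 μ) :
    ‖∫ x, f x ∂μ‖ ^ 2 ≤ μ.real univ * ∫ x, ‖f x‖ ^ 2 ∂μ := by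
  have hnorm : ∫ x, ‖f x‖ ∂μ = ⟪Lp.const 2 μ (1 : ℝ), hf.norm.toLp _⟫_ℝ := by
    rw [← indicatorConstLp_univ, L2.inner_indicatorConstLp_one, setIntegral_univ]
    exact (integral_congr_ae hf.norm.coeFn_toLp).symm
  have hone : ‖Lp.const 2 μ (1 : ℝ)‖ ^ 2 = μ.real univ := by
    rw [← MemLp.toLp_const, norm_toLp_two_sq]
    simp
  calc ‖∫ x, f x ∂μ‖ ^ 2 ≤ (∫ x, ‖f x‖ ∂μ) ^ 2 := by
        gcongr
        exact norm_integral_le_integral_norm f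
    _ ≤ (‖Lp.const 2 μ (1 : ℝ)‖ * ‖hf.norm.toLp _‖) ^ 2 := by
        rw [hnorm]
        exact sq_le_sq' (neg_le_of_abs_le (abs_real_inner_le_norm _ _)) (real_inner_le_norm _ _)
    _ = μ.real univ * ∫ x, ‖f x‖ ^ 2 ∂μ := by
        simp only [mul_pow, hone, norm_toLp_two_sq, norm_norm]

lemma exists_subseq_tendsto_setIntegral {𝕜 : Type*} [RCLike 𝕜] [IsSeparable μ] {f : ℕ → α → 𝕜}
    (hf : ∀ n, MemLp (f n) 2 μ) {C : ℝ} (hC : ∀ n, ∫ x, ‖f n x‖ ^ 2 ∂μ ≤ C) :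
    ∃ g, MemLp g 2 μ ∧ ∃ φ : ℕ → ℕ, StrictMono φ ∧
      (∀ s, MeasurableSet s → μ s ≠ ⊤ →
        Tendsto (fun n => ∫ x in s, f (φ n) x ∂μ) atTop (𝓝 (∫ x in s, g x ∂μ))) ∧
      ∀ L, Tendsto (fun n => ∫ x, ‖f (φ n) x‖ ^ 2 ∂μ) atTop (𝓝 L) →
        ∫ x, ‖g x‖ ^ 2 ∂μ ≤ L := by
  have : Fact ((2 : ENNReal) ≠ ⊤) := ⟨ENNReal.ofNat_ne_top⟩
  obtain ⟨g, φ, hφ, hg⟩ := exists_subseq_tendsto_inner_of_norm_le (𝕜 := 𝕜)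
    (f := fun n => (hf n).toLp (f n)) (C := √C) fun n =>
      Real.le_sqrt_of_sq_le ((norm_toLp_two_sq (hf n)).trans_le (hC n))
  refine ⟨g, Lp.memLp g, φ, hφ, fun s hs hμs => ?_, fun L hL => ?_⟩
  · have h := hg (indicatorConstLp 2 hs hμs 1)
    simp only [L2.inner_indicatorConstLp_one] at h
    exact h.congr fun n => integral_congr_ae (ae_restrict_of_ae (hf (φ n)).coeFn_toLp)
  · rw [← norm_toLp_two_sq (Lp.memLp g), Lp.toLp_coeFn]
    exact norm_sq_le_of_tendsto_inner (hg g) (hL.congr fun n => (norm_toLp_two_sq (hf (φ n))).symm)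

end SquareIntegrable

lemma tendsto_intervalIntegral_comp_of_isCompact {X E : Type*} [TopologicalSpace X] [T2Space X]
    [NormedAddCommGroup E] [NormedSpace ℝ E] {a b : ℝ} {K : Set X} {g : X → E} {F : ℕ → ℝ → X}
    {f : ℝ → X} (hK : IsCompact K) (hg : ContinuousOn g K)
    (hF : ∀ n, ContinuousOn (F n) (uIcc a b)) (hFK : ∀ n, MapsTo (F n) (uIcc a b) K)
    (hlim : ∀ x ∈ uIcc a b, Tendsto (fun n => F n x) atTop (𝓝 (f x))) :
    Tendsto (fun n => ∫ x in a..b, g (F n x)) atTop (𝓝 (∫ x in a..b, g (f x))) := by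
  obtain ⟨B, hB⟩ := hK.exists_bound_of_continuousOn hg
  refine intervalIntegral.tendsto_integral_filter_of_dominated_convergence (fun _ => B)
    (Eventually.of_forall fun n => ?_)
    (Eventually.of_forall fun n => Eventually.of_forall fun x hx =>
      hB _ (hFK n (uIoc_subset_uIcc hx)))
    intervalIntegrable_const (Eventually.of_forall fun x hx => ?_)
  · exact ((hg.comp (hF n) (hFK n)).mono uIoc_subset_uIcc).aestronglyMeasurable measurableSet_uIoc
  · have hx' := uIoc_subset_uIcc hx
    have hmem : ∀ᶠ n in atTop, F n x ∈ K := Eventually.of_forall fun n => hFK n hx'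
    exact (hg (f x) (hK.isClosed.mem_of_tendsto (hlim x hx') hmem)).tendsto.comp
      (tendsto_nhdsWithin_iff.2 ⟨hlim x hx', hmem⟩)

lemma exists_seq_tendsto_sInf_image_lt {α β : Type*} [ConditionallyCompleteLinearOrder β]
    [TopologicalSpace β] [OrderTopology β] [FirstCountableTopology β] {s : Set α} {f : α → β}
    {r : β} (hs : s.Nonempty) (hbdd : BddBelow (f '' s)) (hr : sInf (f '' s) < r) :
    ∃ u : ℕ → α, (∀ n, u n ∈ s) ∧ (∀ n, f (u n) < r) ∧
      Tendsto (fun n => f (u n)) atTop (𝓝 (sInf (f '' s))) := by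
  obtain ⟨v, -, hv, hvs⟩ := exists_seq_tendsto_sInf (hs.image f) hbdd
  choose u hus huv using hvs
  obtain ⟨N, hN⟩ := eventually_atTop.1 (hv.eventually_lt_const hr)
  refine ⟨fun n => u (n + N), fun n => hus _, fun n => ?_, ?_⟩
  · exact (huv _).trans_lt (hN _ (Nat.le_add_left N n))
  · simpa only [huv] using (tendsto_add_atTop_iff_nat N).2 hv

namespace W12

variable {p : (ℝ → ℝ) × (ℝ → ℝ)} {x z : ℝ}

lemma smul_mem (c : ℝ) (hp : p ∈ W12) : c • p ∈ W12 := by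
  refine ⟨fun x hx => ?_, hp.2.1.const_mul c, ?_⟩
  · simp [hp.1 x hx, mul_add]
  · simpa [mul_pow] using hp.2.2.const_mul (c ^ 2)

lemma intervalIntegrable_deriv (hp : p ∈ W12) (hx : x ∈ Icc 0 1) (hz : z ∈ Icc 0 1) :
    IntervalIntegrable p.2 volume x z := by
  rw [← uIcc_of_le zero_le_one] at hx hz
  exact hp.2.1.mono_set (uIcc_subset_uIcc hx hz)

lemma memLp_deriv (hp : p ∈ W12) : MemLp p.2 2 (volume.restrict (Ioc 0 1)) :=
  (memLp_two_iff_integrable_sq hp.2.1.1.aestronglyMeasurable).2 hp.2.2.1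

lemma sub_eq_integral (hp : p ∈ W12) (hx : x ∈ Icc 0 1) (hz : z ∈ Icc 0 1) :
    p.1 x - p.1 z = ∫ t in z..x, p.2 t := by
  have h0 : (0 : ℝ) ∈ Icc (0 : ℝ) 1 := left_mem_Icc.2 zero_le_one
  rw [hp.1 x hx, hp.1 z hz, add_sub_add_left_eq_sub,
    intervalIntegral.integral_interval_sub_left (intervalIntegrable_deriv hp h0 hx)
      (intervalIntegrable_deriv hp h0 hz)]

lemma sq_sub_le (hp : p ∈ W12) (hx : x ∈ Icc 0 1) (hz : z ∈ Icc 0 1) :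
    (p.1 x - p.1 z) ^ 2 ≤ |x - z| * ∫ t in (0 : ℝ)..1, p.2 t ^ 2 := by
  wlog h : z ≤ x generalizing x z
  · rw [← neg_sub, neg_sq, abs_sub_comm]
    exact this hz hx (le_of_not_ge h)
  have hsub : Ioc z x ⊆ Ioc 0 1 := Ioc_subset_Ioc hz.1 hx.2
  calc (p.1 x - p.1 z) ^ 2 = ‖∫ t in Ioc z x, p.2 t‖ ^ 2 := by
        rw [sub_eq_integral hp hx hz, intervalIntegral.integral_of_le h, Real.norm_eq_abs, sq_abs]
    _ ≤ (x - z) * ∫ t in Ioc z x, p.2 t ^ 2 := by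
        simpa [h] using sq_norm_integral_le
          ((memLp_deriv hp).mono_measure (Measure.restrict_mono hsub le_rfl))
    _ ≤ |x - z| * ∫ t in (0 : ℝ)..1, p.2 t ^ 2 := by
        rw [intervalIntegral.integral_of_le zero_le_one]
        gcongr
        · exact le_abs_self _
        · exact Eventually.of_forall fun t => sq_nonneg _
        · exact hp.2.2.1

lemma continuousOn (hp : p ∈ W12) : ContinuousOn p.1 (Icc 0 1) := by
  have h := intervalIntegral.continuousOn_primitive_interval' hp.2.1
    (left_mem_uIcc (a := (0 : ℝ)) (b := 1))
  rw [uIcc_of_le zero_le_one] at h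
  exact (continuousOn_const.add h).congr hp.1

lemma memLp (hp : p ∈ W12) : MemLp p.1 2 (volume.restrict (Ioc 0 1)) :=
  (memLp_two_iff_integrable_sq (((continuousOn hp).mono Ioc_subset_Icc_self).aestronglyMeasurable
    measurableSet_Ioc)).2 (((continuousOn hp).pow 2).integrableOn_Icc.mono_set Ioc_subset_Icc_self)

lemma integral_sq_sub_le (hp : p ∈ W12) (hz : z ∈ Icc 0 1) :
    ∫ x in (0 : ℝ)..1, (p.1 x - p.1 z) ^ 2 ≤ (∫ t in (0 : ℝ)..1, p.2 t ^ 2) / 2 := by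
  set D := ∫ t in (0 : ℝ)..1, p.2 t ^ 2
  have hD : 0 ≤ D := intervalIntegral.integral_nonneg zero_le_one fun t _ => sq_nonneg _
  -- This bound is linear in `x` and has integral `1 / 2` whatever `z` is.
  have habs : ∀ x ∈ Icc (0 : ℝ) 1, |x - z| ≤ z + (1 - 2 * z) * x := fun x hx => by
    rw [abs_le]
    constructor <;> nlinarith [hx.1, hx.2, hz.1, hz.2]
  calc ∫ x in (0 : ℝ)..1, (p.1 x - p.1 z) ^ 2
      ≤ ∫ x in (0 : ℝ)..1, (z + (1 - 2 * z) * x) * D := by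
        refine intervalIntegral.integral_mono_on zero_le_one ?_
          (Continuous.intervalIntegrable (by fun_prop) _ _) fun x hx => ?_
        · exact (((continuousOn hp).sub continuousOn_const).pow 2).intervalIntegrable_of_Icc
            zero_le_one
        · exact (sq_sub_le hp hx hz).trans (mul_le_mul_of_nonneg_right (habs x hx) hD)
    _ = D / 2 := by
        rw [intervalIntegral.integral_mul_const, intervalIntegral.integral_add (by simp)
          (Continuous.intervalIntegrable (by fun_prop) _ _), intervalIntegral.integral_const_mul]
        simp
        ring

lemma dist_sqrt_integral_sq_abs_le (hp : p ∈ W12) (hz : z ∈ Icc 0 1) :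
    dist √(∫ x in (0 : ℝ)..1, p.1 x ^ 2) |p.1 z| ≤ √((∫ t in (0 : ℝ)..1, p.2 t ^ 2) / 2) := by
  rw [Real.dist_eq]
  refine Real.abs_le_sqrt (le_trans ?_ (integral_sq_sub_le hp hz))
  have h := sq_sqrt_integral_sub_sqrt_integral_le (memLp hp)
    (memLp_const (p.1 z) (μ := volume.restrict (Ioc 0 1)))
  simpa [intervalIntegral.integral_of_le, Real.sqrt_sq_eq_abs] using h

lemma exists_subseq_tendsto {u : ℕ → (ℝ → ℝ) × (ℝ → ℝ)} (hu : ∀ n, u n ∈ W12)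
    (hu0 : Bornology.IsBounded (range fun n => (u n).1 0)) {D : ℝ}
    (hD : ∀ n, ∫ t in (0 : ℝ)..1, (u n).2 t ^ 2 ≤ D) :
    ∃ y ∈ W12, ∃ φ : ℕ → ℕ, StrictMono φ ∧
      (∀ x ∈ Icc (0 : ℝ) 1, Tendsto (fun n => (u (φ n)).1 x) atTop (𝓝 (y.1 x))) ∧
      ∀ L, Tendsto (fun n => ∫ t in (0 : ℝ)..1, (u (φ n)).2 t ^ 2) atTop (𝓝 L) →
        ∫ t in (0 : ℝ)..1, y.2 t ^ 2 ≤ L := by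
  simp only [intervalIntegral.integral_of_le zero_le_one] at hD ⊢
  obtain ⟨c, -, φ, hφ, hc⟩ := tendsto_subseq_of_bounded hu0 fun n => mem_range_self n
  obtain ⟨g, hg, ψ, hψ, hψg, hgL⟩ := exists_subseq_tendsto_setIntegral
    (fun n => memLp_deriv (hu (φ n))) fun n => by simpa using hD (φ n)
  refine ⟨(fun x => c + ∫ t in (0 : ℝ)..x, g t, g), ⟨fun x _ => by simp, ?_, ?_⟩, φ ∘ ψ,
    hφ.comp hψ, fun x hx => ?_, by simpa using hgL⟩
  · exact (intervalIntegrable_iff_integrableOn_Ioc_of_le zero_le_one).2 (hg.integrable one_le_two)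
  · exact (intervalIntegrable_iff_integrableOn_Ioc_of_le zero_le_one).2 hg.integrable_sq
  · have h := (hc.comp hψ.tendsto_atTop).add (hψg (Ioc 0 x) measurableSet_Ioc (measure_ne_top _ _))
    rw [Measure.restrict_restrict_of_subset (Ioc_subset_Ioc_right hx.2),
      ← intervalIntegral.integral_of_le hx.1] at h
    refine h.congr fun n => ?_
    rw [← intervalIntegral.integral_of_le hx.1]
    exact ((hu _).1 x hx).symm

end W12

namespace Mset

variable {p : (ℝ → ℝ) × (ℝ → ℝ)} {c : ℝ}

lemma one_mem : ((1, 0) : (ℝ → ℝ) × (ℝ → ℝ)) ∈ Mset :=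
  ⟨⟨by simp, IntervalIntegrable.zero, by simp⟩, 1, one_pos, by simp⟩

lemma smul_mem (hc : 0 < c) (hp : p ∈ Mset) : c • p ∈ Mset := by
  obtain ⟨hpW, ζ, hζ, hpζ⟩ := hp
  exact ⟨W12.smul_mem c hpW, c * ζ, mul_pos hc hζ,
    fun x hx => mul_le_mul_of_nonneg_left (hpζ x hx) hc.le⟩

lemma pos (hp : p ∈ Mset) {x : ℝ} (hx : x ∈ Icc 0 1) : 0 < p.1 x := by
  obtain ⟨-, ζ, hζ, hpζ⟩ := hp
  exact hζ.trans_le (hpζ x hx)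

lemma integral_rpow_pos (hp : p ∈ Mset) (a : ℝ) : 0 < ∫ t in (0 : ℝ)..1, p.1 t ^ a := by
  have hcont : ContinuousOn (fun t => p.1 t ^ a) (Icc 0 1) :=
    (W12.continuousOn hp.1).rpow_const fun x hx => Or.inl (pos hp hx).ne'
  exact intervalIntegral.intervalIntegral_pos_of_pos_on
    (hcont.intervalIntegrable_of_Icc zero_le_one)
    (fun x hx => Real.rpow_pos_of_pos (pos hp (Ioo_subset_Icc_self hx)) a) zero_lt_one

lemma integral_sq_pos (hp : p ∈ Mset) : 0 < ∫ t in (0 : ℝ)..1, p.1 t ^ 2 := by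
  simpa using integral_rpow_pos hp 2

lemma integral_rpow_smul (hc : 0 < c) (hp : p ∈ Mset) (a : ℝ) :
    ∫ t in (0 : ℝ)..1, (c • p).1 t ^ a = c ^ a * ∫ t in (0 : ℝ)..1, p.1 t ^ a := by
  rw [← intervalIntegral.integral_const_mul]
  refine intervalIntegral.integral_congr fun t ht => ?_
  rw [uIcc_of_le zero_le_one] at ht
  exact Real.mul_rpow hc.le (pos hp ht).le

end Mset

section Homogeneity

variable {γ c : ℝ} {p : (ℝ → ℝ) × (ℝ → ℝ)}

lemma integral_sq_deriv_le_Jg (hp : p ∈ Mset) :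
    ∫ t in (0 : ℝ)..1, p.2 t ^ 2 ≤ Jg γ p :=
  le_add_of_nonneg_right (Real.rpow_nonneg (Mset.integral_rpow_pos hp _).le _)

lemma Jg_smul (h0 : γ ≠ 0) (h1 : γ ≠ 1) (hc : 0 < c) (hp : p ∈ Mset) :
    Jg γ (c • p) = c ^ 2 * Jg γ p := by
  have hexp : 2 * γ / (γ - 1) * ((γ - 1) / γ) = 2 := by
    have := sub_ne_zero.2 h1
    field_simp
  rw [Jg, Mset.integral_rpow_smul hc hp,
    Real.mul_rpow (by positivity) (Mset.integral_rpow_pos hp _).le, ← Real.rpow_mul hc.le, hexp]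
  simp [Jg, mul_pow, mul_add]

lemma Gg_smul (h0 : γ ≠ 0) (h1 : γ ≠ 1) (hc : 0 < c) (hp : p ∈ Mset) :
    Gg γ (c • p) = Gg γ p := by
  rw [Gg, Jg_smul h0 h1 hc hp]
  simp [Gg, mul_pow, mul_div_mul_left, hc.ne']

end Homogeneity

/-- The functions of the class `M` whose `L²[0,1]`-norm is `1`. The quotient `G_γ` is minimized on
this set, where it reduces to `J_γ`. -/
def unitMset : Set ((ℝ → ℝ) × (ℝ → ℝ)) :=
  {p ∈ Mset | ∫ t in (0 : ℝ)..1, p.1 t ^ 2 = 1}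

namespace unitMset

variable {γ D : ℝ} {p : (ℝ → ℝ) × (ℝ → ℝ)}

lemma one_mem : ((1, 0) : (ℝ → ℝ) × (ℝ → ℝ)) ∈ unitMset :=
  ⟨Mset.one_mem, by simp⟩

lemma image_Jg (h0 : γ ≠ 0) (h1 : γ ≠ 1) : Jg γ '' unitMset = Gg γ '' Mset := by
  have hGJ : ∀ p ∈ unitMset, Gg γ p = Jg γ p := fun p hp => by rw [Gg, hp.2, div_one]
  ext r
  constructor
  · rintro ⟨p, hp, rfl⟩
    exact ⟨p, hp.1, hGJ p hp⟩
  · rintro ⟨p, hp, rfl⟩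
    have hS := Mset.integral_sq_pos hp
    set S := ∫ t in (0 : ℝ)..1, p.1 t ^ 2 with hSdef
    have hc : 0 < (√S)⁻¹ := by positivity
    have hunit : (√S)⁻¹ • p ∈ unitMset := by
      refine ⟨Mset.smul_mem hc hp, ?_⟩
      simp [mul_pow, ← hSdef, Real.sq_sqrt hS.le, hS.ne']
    exact ⟨_, hunit, by rw [← hGJ _ hunit, Gg_smul h0 h1 hc hp]⟩

lemma mapsTo_closedBall (hp : p ∈ unitMset) (hD : ∫ t in (0 : ℝ)..1, p.2 t ^ 2 ≤ D) :
    MapsTo p.1 (Icc 0 1) (closedBall 1 √(D / 2)) := fun z hz => by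
  have h := W12.dist_sqrt_integral_sq_abs_le hp.1.1 hz
  rw [hp.2, Real.sqrt_one, abs_of_pos (Mset.pos hp.1 hz)] at h
  exact mem_closedBall'.2 (h.trans (by gcongr))

lemma exists_subseq_tendsto {u : ℕ → (ℝ → ℝ) × (ℝ → ℝ)} (hu : ∀ n, u n ∈ unitMset) (hD2 : D < 2)
    (hD : ∀ n, ∫ t in (0 : ℝ)..1, (u n).2 t ^ 2 ≤ D) :
    ∃ y ∈ unitMset, ∃ φ : ℕ → ℕ, StrictMono φ ∧
      (∀ a : ℝ, Tendsto (fun n => ∫ t in (0 : ℝ)..1, (u (φ n)).1 t ^ a) atTop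
        (𝓝 (∫ t in (0 : ℝ)..1, y.1 t ^ a))) ∧
      ∀ L, Tendsto (fun n => ∫ t in (0 : ℝ)..1, (u (φ n)).2 t ^ 2) atTop (𝓝 L) →
        ∫ t in (0 : ℝ)..1, y.2 t ^ 2 ≤ L := by
  have hu_mem := fun n => mapsTo_closedBall (hu n) (hD n)
  have hr : √(D / 2) < 1 := (Real.sqrt_lt' one_pos).2 (by linarith)
  have hball : ∀ s ∈ closedBall 1 √(D / 2), 1 - √(D / 2) ≤ s := fun s hs => by
    rw [Real.closedBall_eq_Icc] at hs
    exact hs.1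
  obtain ⟨y, hyW, φ, hφ, hy, hyL⟩ := W12.exists_subseq_tendsto (fun n => (hu n).1.1)
    (isBounded_closedBall.subset
      (range_subset_iff.2 fun n => hu_mem n (left_mem_Icc.2 zero_le_one))) hD
  have hy_mem : MapsTo y.1 (Icc 0 1) (closedBall 1 √(D / 2)) := fun x hx =>
    isClosed_closedBall.mem_of_tendsto (hy x hx) (Eventually.of_forall fun n => hu_mem (φ n) hx)
  have hrpow : ∀ a : ℝ, Tendsto (fun n => ∫ t in (0 : ℝ)..1, (u (φ n)).1 t ^ a) atTop
      (𝓝 (∫ t in (0 : ℝ)..1, y.1 t ^ a)) := fun a => by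
    rw [← uIcc_of_le zero_le_one] at hy
    refine tendsto_intervalIntegral_comp_of_isCompact (g := fun s => s ^ a)
      (isCompact_closedBall 1 √(D / 2)) (fun s hs => ?_) (fun n => ?_) (fun n => ?_) hy
    · have hs0 : 0 < s := (sub_pos.2 hr).trans_le (hball s hs)
      exact (Real.continuousAt_rpow_const s a (Or.inl hs0.ne')).continuousWithinAt
    · simpa using W12.continuousOn (hu (φ n)).1.1
    · simpa using hu_mem (φ n)
  have hy1 : ∫ t in (0 : ℝ)..1, y.1 t ^ 2 = 1 := by
    have h := hrpow 2
    simp only [Real.rpow_two, (hu _).2] at h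
    exact tendsto_nhds_unique h tendsto_const_nhds
  exact ⟨y, ⟨⟨hyW, 1 - √(D / 2), sub_pos.2 hr, fun x hx => hball _ (hy_mem hx)⟩, hy1⟩, φ, hφ,
    hrpow, hyL⟩

lemma exists_Jg_le_of_tendsto {u : ℕ → (ℝ → ℝ) × (ℝ → ℝ)} (hu : ∀ n, u n ∈ unitMset) (hD2 : D < 2)
    (hD : ∀ n, ∫ t in (0 : ℝ)..1, (u n).2 t ^ 2 ≤ D) {m : ℝ}
    (hm : Tendsto (fun n => Jg γ (u n)) atTop (𝓝 m)) : ∃ y ∈ unitMset, Jg γ y ≤ m := by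
  obtain ⟨y, hy, φ, hφ, hrpow, hyL⟩ := exists_subseq_tendsto hu hD2 hD
  refine ⟨y, hy, ?_⟩
  have hpower := (hrpow (2 * γ / (γ - 1))).rpow_const (p := (γ - 1) / γ)
    (Or.inl (Mset.integral_rpow_pos hy.1 _).ne')
  have h := hyL _ (((hm.comp hφ.tendsto_atTop).sub hpower).congr fun n =>
    add_sub_cancel_right _ _)
  rw [Jg]
  linarith

end unitMset

theorem Gg_attains_inf_general (γ : ℝ) (h0 : γ ≠ 0) (h1 : γ ≠ 1) :
    ∃ ystar ∈ Mset, Gg γ ystar = sInf (Gg γ '' Mset) := by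
  have himage := unitMset.image_Jg h0 h1
  have hbdd : BddBelow (Jg γ '' unitMset) := by
    refine ⟨0, ?_⟩
    rintro _ ⟨p, hp, rfl⟩
    exact (intervalIntegral.integral_nonneg zero_le_one fun t _ => sq_nonneg _).trans
      (integral_sq_deriv_le_Jg hp.1)
  have hlt : sInf (Jg γ '' unitMset) < 3 / 2 :=
    (csInf_le hbdd ⟨_, unitMset.one_mem, rfl⟩).trans_lt (by norm_num [Jg])
  obtain ⟨u, hu, huJ, hlim⟩ := exists_seq_tendsto_sInf_image_lt ⟨_, unitMset.one_mem⟩ hbdd hlt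
  obtain ⟨y, hy, hyJ⟩ := unitMset.exists_Jg_le_of_tendsto hu (by norm_num : (3 / 2 : ℝ) < 2)
    (fun n => (integral_sq_deriv_le_Jg (hu n).1).trans (huJ n).le) hlim
  refine ⟨y, hy.1, ?_⟩
  rw [← himage, Gg, hy.2, div_one]
  exact hyJ.antisymm (csInf_le hbdd ⟨y, hy, rfl⟩)

/-- For every `γ ∈ (0,1)` the functional `G_γ` attains its infimum on `M`. -/
theorem Gg_attains_inf (γ : ℝ) (hγ : γ ∈ Ioo (0:ℝ) 1) :
    ∃ ystar ∈ Mset, Gg γ ystar = sInf (Gg γ '' Mset) :=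
  Gg_attains_inf_general γ hγ.1.ne' hγ.2.ne
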